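/- arXiv:2109.02835 — 2 statements merged into one kernel-verified Lean document; each statement's English description precedes it below -/
import Mathlib

section
/- For every nonnegative integer k, the edge-colored lattice L7(k) is E7-structured: for every covering edge t ⋖ s of L7(k) of color i and every node j, m_j(s) = m_j(t) + A(E7)_{i,j}. Moreover L7(k) has a unique maximal element, namely the constant function with value k, and its weight is kω_1: m_1 of the maximal element equals k, and m_j of the maximal element equals 0 for every node j ≠ 1. -/
noncomputable section

namespace CL

variable {N : Type} [DecidableEq N] [Fintype N]

/-- One-step relation generating the partial order on the poset of positions. -/
def step (adj : N → N → Prop) (pos : Finset (N × ℕ)) (x y : N × ℕ) : Prop :=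
  x ∈ pos ∧ y ∈ pos ∧ adj x.1 y.1 ∧ y.2 = x.2 + 1

/-- The partial order on positions, generated by `step`. -/
def ple (adj : N → N → Prop) (pos : Finset (N × ℕ)) : N × ℕ → N × ℕ → Prop :=
  Relation.ReflTransGen (step adj pos)

/-- The lattice of `ℕ`-labellings of the positions which are bounded by `k`, order-reversing,
and satisfy a further constraint `extra`. -/
def Elt (adj : N → N → Prop) (pos : Finset (N × ℕ)) (k : ℕ)
    (extra : ({x : N × ℕ // x ∈ pos} → ℕ) → Prop) : Type :=
  {c : {x : N × ℕ // x ∈ pos} → ℕ //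
    (∀ x, c x ≤ k) ∧ (∀ x y, ple adj pos y.1 x.1 → c x ≤ c y) ∧ extra c}

variable {adj : N → N → Prop} {pos : Finset (N × ℕ)} {k : ℕ}
  {extra : ({x : N × ℕ // x ∈ pos} → ℕ) → Prop}

instance : Finite (Elt adj pos k extra) := by
  apply Finite.of_injective
    (fun c : Elt adj pos k extra =>
      fun x => (⟨c.1 x, Nat.lt_succ_of_le (c.2.1 x)⟩ : Fin (k + 1)))
  intro c d h
  apply Subtype.ext
  funext x
  exact congrArg Fin.val (congrFun h x)

instance : Fintype (Elt adj pos k extra) := Fintype.ofFinite _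

instance : DecidableEq (Elt adj pos k extra) := by unfold Elt; infer_instance

/-- Componentwise comparison of labellings. -/
def elLe (r s : Elt adj pos k extra) : Prop := ∀ x, r.1 x ≤ s.1 x

/-- The covering edge of color `i`: exactly one entry, at a position of color `i`,
is increased by one. -/
def edge (i : N) (r s : Elt adj pos k extra) : Prop :=
  ∃ x : {x : N × ℕ // x ∈ pos}, x.1.1 = i ∧ s.1 x = r.1 x + 1 ∧
    ∀ y, y ≠ x → s.1 y = r.1 y

instance (i : N) (r s : Elt adj pos k extra) : Decidable (edge i r s) := by
  unfold edge; infer_instance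

/-- The rank function: the sum of all entries. -/
def rk (t : Elt adj pos k extra) : ℕ := ∑ x ∈ pos.attach, t.1 x

/-- The connected component of `t` in the graph of color-`i` covering edges. -/
def comp (i : N) (t : Elt adj pos k extra) : Set (Elt adj pos k extra) :=
  {s | Relation.ReflTransGen (fun a b => edge i a b ∨ edge i b a) t s}

/-- The integer `m_i(t) = (ρ(t) − min ρ on comp_i(t)) − (max ρ on comp_i(t) − ρ(t))`. -/
def mwt (i : N) (t : Elt adj pos k extra) : ℤ :=
  ((rk t : ℤ) - ((sInf (rk '' comp i t) : ℕ) : ℤ)) -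
    (((sSup (rk '' comp i t) : ℕ) : ℤ) - (rk t : ℤ))

end CL

/-! ### Type `E₇` data -/

/-- The nodes `1, 2, 3, 4, 5, 5', 6'` of the `E₇` Dynkin diagram. -/
inductive N7 : Type
  | n1 | n2 | n3 | n4 | n5 | n5p | n6p
  deriving DecidableEq

instance : Fintype N7 where
  elems := ⟨([.n1, .n2, .n3, .n4, .n5, .n5p, .n6p] : List N7), by decide⟩
  complete := by intro x; cases x <;> decide

open N7

/-- Adjacency in the `E₇` Dynkin diagram: edges `1-2, 2-3, 3-4, 4-5, 4-5', 5'-6'`. -/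
abbrev adj7 : N7 → N7 → Prop := fun a b =>
  (a, b) ∈ ([(n1, n2), (n2, n3), (n3, n4), (n4, n5), (n4, n5p), (n5p, n6p)] : List (N7 × N7)) ∨
  (b, a) ∈ ([(n1, n2), (n2, n3), (n3, n4), (n4, n5), (n4, n5p), (n5p, n6p)] : List (N7 × N7))

/-- The 27 (color, rank) positions of the minuscule poset `P₇ = P_{E₇}(ω₁)`. -/
def pos7 : Finset (N7 × ℕ) :=
  {(n1, 0), (n2, 1), (n3, 2), (n4, 3), (n5, 4), (n5p, 4), (n4, 5), (n6p, 5), (n3, 6),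
   (n5p, 6), (n2, 7), (n4, 7), (n1, 8), (n3, 8), (n5, 8), (n2, 9), (n4, 9), (n3, 10),
   (n5p, 10), (n4, 11), (n6p, 11), (n5, 12), (n5p, 12), (n4, 13), (n3, 14), (n2, 15), (n1, 16)}

/-- The lattice `L7(k) = L_{E₇}(kω₁)` of order-reversing labellings of `P₇` by `{0,…,k}`. -/
abbrev L7 (k : ℕ) : Type := CL.Elt adj7 pos7 k (fun _ => True)

/-- The Cartan matrix of type `E₇`, indexed by the nodes. -/
def A7 : N7 → N7 → ℤ := fun i j => if i = j then 2 else if adj7 i j then -1 else 0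

/-!
The component of `t` for colour `j` consists of all labellings that agree with `t` off colour `j`.
It therefore has a maximum and a minimum, obtained by setting every entry of colour `j` to the
minimum of the entries it covers (or `k`), respectively to the maximum of the entries covering it
(or `0`). So `m_j(t)` is the sum, over the positions of colour `j`, of `2 t(x)` minus these two
bounds.

In a minuscule poset the positions of colour `j` form a chain, and between two consecutive ones lie
exactly two positions `a, b` of colours adjacent to `j`. These bound the position above them by
`min (t a) (t b)` and the one below them by `max (t a) (t b)`, with sum `t a + t b`. Below the first
position of colour `j`, and above the last, there is at most one neighbour. Hence `m_j(t)` is an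
affine function of `t` whose coefficient at `x` is the Cartan matrix entry of `(color x, j)`, which
is what being structured by the Cartan matrix means. A position of colour `j` contributes to the
weight of the constant labelling `k` only when nothing covers it.
-/

section FinsetSums

variable {α M : Type*} [AddCommMonoid M]

theorem sum_count_eq_sum_range (p : ℕ → Prop) [DecidablePred p] (f : ℕ → M) (n : ℕ) :
    ∑ m ∈ Finset.range n with p m, f (Nat.count p m) = ∑ i ∈ Finset.range (Nat.count p n), f i := by
  induction n with
  | zero => simp only [Finset.range_zero, Finset.filter_empty, Nat.count_zero, Finset.sum_empty]
  | succ n ih =>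
    rw [Finset.sum_filter, Finset.sum_range_succ, ← Finset.sum_filter, ih, Nat.count_succ]
    split_ifs
    · rw [Finset.sum_range_succ]
    · rw [add_zero, add_zero]

variable [LinearOrder M]

theorem fold_min_add_sup_of_card_eq_two [OrderBot M] {s : Finset α} (hs : s.card = 2) {f : α → M}
    {k : M} (hf : ∀ a, f a ≤ k) : s.fold min k f + s.sup f = ∑ a ∈ s, f a := by
  classical
  obtain ⟨a, b, hab, rfl⟩ := Finset.card_eq_two.1 hs
  rw [Finset.fold_insert (Finset.notMem_singleton.2 hab), Finset.fold_singleton,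
    min_eq_left (hf b), Finset.sup_insert, Finset.sup_singleton, Finset.sum_pair hab]
  exact min_add_max (f a) (f b)

theorem fold_min_of_card_le_one [DecidableEq α] {s : Finset α} (hs : s.card ≤ 1) {f : α → M}
    {k : M} (hf : ∀ a, f a ≤ k) : s.fold min k f = ∑ a ∈ s, f a + if s = ∅ then k else 0 := by
  rcases Nat.le_one_iff_eq_zero_or_eq_one.1 hs with hs | hs
  · obtain rfl := Finset.card_eq_zero.1 hs
    rw [Finset.fold_empty, Finset.sum_empty, if_pos rfl, zero_add]
  · obtain ⟨a, rfl⟩ := Finset.card_eq_one.1 hs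
    rw [Finset.fold_singleton, Finset.sum_singleton, min_eq_left (hf a),
      if_neg (Finset.singleton_ne_empty a), add_zero]

theorem sup_of_card_le_one [CanonicallyOrderedAdd M] [OrderBot M] {s : Finset α}
    (hs : s.card ≤ 1) (f : α → M) : s.sup f = ∑ a ∈ s, f a := by
  rcases Nat.le_one_iff_eq_zero_or_eq_one.1 hs with hs | hs
  · obtain rfl := Finset.card_eq_zero.1 hs
    rw [Finset.sup_empty, Finset.sum_empty, bot_eq_zero']
  · obtain ⟨a, rfl⟩ := Finset.card_eq_one.1 hs
    rw [Finset.sup_singleton, Finset.sum_singleton]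

end FinsetSums

namespace CL

section Order

variable {N : Type} {adj : N → N → Prop} {pos : Finset (N × ℕ)}

theorem antitone_of_step {f : {x // x ∈ pos} → ℕ}
    (hf : ∀ x y : {x // x ∈ pos}, step adj pos x.1 y.1 → f y ≤ f x) (x y : {x // x ∈ pos})
    (h : ple adj pos y.1 x.1) : f x ≤ f y := by
  obtain ⟨q, hq⟩ := x
  change ple adj pos y.1 q at h
  induction h with
  | refl => exact le_rfl
  | tail _ hstep ih => exact (hf ⟨_, hstep.1⟩ ⟨_, hq⟩ hstep).trans (ih hstep.1)

theorem eq_or_rank_lt_of_ple {p q : N × ℕ} (h : ple adj pos p q) : p = q ∨ p.2 < q.2 := by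
  induction h with
  | refl => exact .inl rfl
  | tail _ hstep ih =>
    have := hstep.2.2.2
    rcases ih with rfl | ih
    · exact .inr (by omega)
    · exact .inr (by omega)

theorem rank_lt_sup_add_one (x : {x // x ∈ pos}) : x.1.2 < pos.sup Prod.snd + 1 :=
  Nat.lt_succ_of_le (Finset.le_sup (f := Prod.snd) x.2)

/-- The positions one step above some element of `S`; iterating it gives a decidable
sufficient condition for `ple`. -/
def stepImage (adj : N → N → Prop) [DecidableRel adj] (pos S : Finset (N × ℕ)) :
    Finset (N × ℕ) :=
  {q ∈ pos | ∃ p ∈ S, q.2 = p.2 + 1 ∧ adj p.1 q.1}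

theorem exists_ple_of_mem_stepImage_iterate [DecidableRel adj] {S : Finset (N × ℕ)} (hS : S ⊆ pos)
    {n : ℕ} {q : N × ℕ} (hq : q ∈ (stepImage adj pos)^[n] S) : ∃ p ∈ S, ple adj pos p q := by
  induction n generalizing S with
  | zero => exact ⟨q, hq, .refl⟩
  | succ n ih =>
    obtain ⟨r, hr, hrq⟩ := ih (Finset.filter_subset _ _) hq
    obtain ⟨hrpos, p, hp, hrank, hadj⟩ := Finset.mem_filter.1 hr
    exact ⟨p, hp, .head ⟨hS hp, hrpos, hadj, hrank⟩ hrq⟩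

theorem ple_of_mem_stepImage_iterate_singleton [DecidableRel adj] {p q : N × ℕ} (hp : p ∈ pos)
    {n : ℕ} (hq : q ∈ (stepImage adj pos)^[n] {p}) : ple adj pos p q := by
  obtain ⟨p', hp', hple⟩ :=
    exists_ple_of_mem_stepImage_iterate (Finset.singleton_subset_iff.2 hp) hq
  rwa [← Finset.mem_singleton.1 hp']

end Order

section Component

variable {N : Type} {adj : N → N → Prop} {pos : Finset (N × ℕ)} {k : ℕ}

/-- The order-reversing labellings of the positions by `{0, …, k}`, with no extra constraint. -/
abbrev Labelling (adj : N → N → Prop) (pos : Finset (N × ℕ)) (k : ℕ) : Type :=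
  Elt adj pos k fun _ => True

/-- The labelling with values `f`, where order reversal need only be checked on single steps. -/
def Labelling.ofStep (f : {x // x ∈ pos} → ℕ) (hk : ∀ x, f x ≤ k)
    (hf : ∀ x y : {x // x ∈ pos}, step adj pos x.1 y.1 → f y ≤ f x) : Labelling adj pos k :=
  ⟨f, hk, antitone_of_step hf, trivial⟩

theorem Labelling.le_of_step (t : Labelling adj pos k) {x y : {x // x ∈ pos}}
    (h : step adj pos x.1 y.1) : t.1 y ≤ t.1 x :=
  t.2.2.1 y x (.single h)

theorem rk_eq_sum (t : Labelling adj pos k) : rk t = ∑ x, t.1 x := rfl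

theorem edge.rk_eq {j : N} {t s : Labelling adj pos k} (h : edge j t s) :
    rk s = rk t + 1 := by
  classical
  obtain ⟨x, -, hx, hne⟩ := h
  rw [rk_eq_sum, rk_eq_sum, ← Finset.add_sum_erase _ _ (Finset.mem_univ x),
    ← Finset.add_sum_erase _ t.1 (Finset.mem_univ x), hx,
    Finset.sum_congr rfl fun y hy => hne y (Finset.ne_of_mem_erase hy)]
  ring

theorem edge.eq_of_ne {j : N} {t s : Labelling adj pos k} (h : edge j t s) {x : {x // x ∈ pos}}
    (hx : x.1.1 ≠ j) : s.1 x = t.1 x := by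
  obtain ⟨y, hy, -, hne⟩ := h
  exact hne x fun hxy => hx (hxy ▸ hy)

theorem mem_comp_symm {j : N} {t s : Labelling adj pos k} (h : s ∈ comp j t) : t ∈ comp j s :=
  (@Relation.ReflTransGen.stdSymm _ _ ⟨fun _ _ => Or.symm⟩).symm _ _ h

/-- Off colour `j` the two labellings agree, and the elements covered by a position of colour `j`
have other colours; so any entry of `t` lying below that of `s` may be raised. -/
theorem exists_edge_of_lt (hirr : ∀ a, ¬ adj a a) {j : N} {t s : Labelling adj pos k}
    (hle : elLe t s) (hoff : ∀ x, x.1.1 ≠ j → s.1 x = t.1 x) {x : {x // x ∈ pos}}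
    (hx : t.1 x < s.1 x) : ∃ t' : Labelling adj pos k, edge j t t' ∧ elLe t' s := by
  classical
  have hxj : x.1.1 = j := by_contra fun h => hx.ne' (hoff x h)
  have update_le : ∀ y, Function.update t.1 x (t.1 x + 1) y ≤ s.1 y := fun y => by
    rcases eq_or_ne y x with rfl | hy
    · rwa [Function.update_self]
    · rw [Function.update_of_ne hy]
      exact hle y
  have update_step : ∀ y z : {x // x ∈ pos}, step adj pos y.1 z.1 →
      Function.update t.1 x (t.1 x + 1) z ≤ Function.update t.1 x (t.1 x + 1) y := by
    intro y z h
    by_cases hyj : y.1.1 = j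
    · have hz : z ≠ x := fun hz => hirr j (by simpa only [hyj, hz, hxj] using h.2.2.1)
      rw [Function.update_of_ne hz]
      exact (t.le_of_step h).trans (le_update_self_iff.2 (Nat.le_succ _) y)
    · have hy : y ≠ x := fun hy => hyj (hy ▸ hxj)
      rw [Function.update_of_ne hy, ← hoff y hyj]
      exact (update_le z).trans (s.le_of_step h)
  exact ⟨.ofStep _ (fun y => (update_le y).trans (s.2.1 y)) update_step,
    ⟨x, hxj, Function.update_self .., fun y hy => Function.update_of_ne hy ..⟩, update_le⟩

theorem mem_comp_of_le (hirr : ∀ a, ¬ adj a a) {j : N} {t s : Labelling adj pos k}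
    (hle : elLe t s) (hoff : ∀ x, x.1.1 ≠ j → s.1 x = t.1 x) : s ∈ comp j t := by
  induction hn : rk s - rk t using Nat.strong_induction_on generalizing t with
  | _ n ih =>
    by_cases hex : ∃ x, t.1 x < s.1 x
    · obtain ⟨x, hx⟩ := hex
      obtain ⟨t', hedge, hle'⟩ := exists_edge_of_lt hirr hle hoff hx
      have hrk : rk t' ≤ rk s := Finset.sum_le_sum fun y _ => hle' y
      have hrk' := hedge.rk_eq
      exact .head (.inl hedge) (ih _ (by omega) hle'
        (fun y hy => (hoff y hy).trans (hedge.eq_of_ne hy).symm) rfl)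
    · obtain rfl : t = s :=
        Subtype.ext (funext fun x => (hle x).antisymm (not_lt.1 fun hx => hex ⟨x, hx⟩))
      exact .refl

theorem mem_comp_iff (hirr : ∀ a, ¬ adj a a) {j : N} {t s : Labelling adj pos k} :
    s ∈ comp j t ↔ ∀ x, x.1.1 ≠ j → s.1 x = t.1 x := by
  constructor
  · intro h x hx
    induction h with
    | refl => rfl
    | tail _ hedge ih =>
      rw [← ih]
      rcases hedge with hedge | hedge
      · exact hedge.eq_of_ne hx
      · exact (hedge.eq_of_ne hx).symm
  · intro hoff
    let u : Labelling adj pos k := ⟨fun x => max (t.1 x) (s.1 x),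
      fun x => max_le (t.2.1 x) (s.2.1 x),
      fun x y h => max_le_max (t.2.2.1 x y h) (s.2.2.1 x y h), trivial⟩
    have htu : u ∈ comp j t := mem_comp_of_le hirr (fun _ => le_max_left ..)
      fun x hx => max_eq_left (hoff x hx).le
    have hsu : u ∈ comp j s := mem_comp_of_le hirr (fun _ => le_max_right ..)
      fun x hx => max_eq_right (hoff x hx).ge
    exact htu.trans (mem_comp_symm hsu)

open Classical in
/-- The largest value at `x` allowed by the bound `k` and the values of `t` at the positions
covered by `x`. -/
def maxValue (t : Labelling adj pos k) (x : {x // x ∈ pos}) : ℕ :=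
  ({y | step adj pos y.1 x.1} : Finset {x // x ∈ pos}).fold min k t.1

open Classical in
/-- The smallest value at `x` allowed by the values of `t` at the positions covering `x`. -/
def minValue (t : Labelling adj pos k) (x : {x // x ∈ pos}) : ℕ :=
  ({y | step adj pos x.1 y.1} : Finset {x // x ∈ pos}).sup t.1

theorem le_maxValue_iff {t : Labelling adj pos k} {x : {x // x ∈ pos}} {c : ℕ} :
    c ≤ maxValue t x ↔ c ≤ k ∧ ∀ y : {x // x ∈ pos}, step adj pos y.1 x.1 → c ≤ t.1 y := by
  simp only [maxValue, Finset.le_fold_min, Finset.mem_filter, Finset.mem_univ, true_and]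

theorem minValue_le_iff {t : Labelling adj pos k} {x : {x // x ∈ pos}} {c : ℕ} :
    minValue t x ≤ c ↔ ∀ y : {x // x ∈ pos}, step adj pos x.1 y.1 → t.1 y ≤ c := by
  simp only [minValue, Finset.sup_le_iff, Finset.mem_filter, Finset.mem_univ, true_and]

theorem le_maxValue (t : Labelling adj pos k) (x : {x // x ∈ pos}) : t.1 x ≤ maxValue t x :=
  le_maxValue_iff.2 ⟨t.2.1 x, fun _ => t.le_of_step⟩

theorem minValue_le (t : Labelling adj pos k) (x : {x // x ∈ pos}) : minValue t x ≤ t.1 x :=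
  minValue_le_iff.2 fun _ => t.le_of_step

variable [DecidableEq N]

/-- The labelling obtained from `t` by making all entries of colour `j` as large as possible: the
maximum of the component `comp j t`. -/
def compMax (hirr : ∀ a, ¬ adj a a) (j : N) (t : Labelling adj pos k) : Labelling adj pos k :=
  .ofStep (fun x => if x.1.1 = j then maxValue t x else t.1 x)
    (fun x => by
      split_ifs
      · exact (le_maxValue_iff.1 le_rfl).1
      · exact t.2.1 x)
    (fun x y h => by
      split_ifs with hy hx hx
      · exact absurd (hx.trans hy.symm ▸ h.2.2.1) (hirr _)
      · exact (le_maxValue_iff.1 le_rfl).2 x h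
      · exact (t.le_of_step h).trans (le_maxValue t x)
      · exact t.le_of_step h)

/-- The labelling obtained from `t` by making all entries of colour `j` as small as possible: the
minimum of the component `comp j t`. -/
def compMin (hirr : ∀ a, ¬ adj a a) (j : N) (t : Labelling adj pos k) : Labelling adj pos k :=
  .ofStep (fun x => if x.1.1 = j then minValue t x else t.1 x)
    (fun x => by
      split_ifs
      · exact (minValue_le t x).trans (t.2.1 x)
      · exact t.2.1 x)
    (fun x y h => by
      split_ifs with hy hx hx
      · exact absurd (hx.trans hy.symm ▸ h.2.2.1) (hirr _)
      · exact (minValue_le t y).trans (t.le_of_step h)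
      · exact minValue_le_iff.1 le_rfl y h
      · exact t.le_of_step h)

theorem elLe_compMax (hirr : ∀ a, ¬ adj a a) {j : N} {t s : Labelling adj pos k}
    (h : s ∈ comp j t) : elLe s (compMax hirr j t) := by
  intro x
  change _ ≤ ite _ _ _
  have hoff := (mem_comp_iff hirr).1 h
  split_ifs with hx
  · refine le_maxValue_iff.2 ⟨s.2.1 x, fun y hy => ?_⟩
    rw [← hoff y fun hyj => hirr j (by simpa only [hyj, hx] using hy.2.2.1)]
    exact s.le_of_step hy
  · exact (hoff x hx).le

theorem compMin_elLe (hirr : ∀ a, ¬ adj a a) {j : N} {t s : Labelling adj pos k}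
    (h : s ∈ comp j t) : elLe (compMin hirr j t) s := by
  intro x
  change ite _ _ _ ≤ _
  have hoff := (mem_comp_iff hirr).1 h
  split_ifs with hx
  · refine minValue_le_iff.2 fun y hy => ?_
    rw [← hoff y fun hyj => hirr j (by simpa only [hyj, hx] using hy.2.2.1)]
    exact s.le_of_step hy
  · exact (hoff x hx).ge

theorem sSup_rk_comp (hirr : ∀ a, ¬ adj a a) (j : N) (t : Labelling adj pos k) :
    sSup (rk '' comp j t) = rk (compMax hirr j t) := by
  refine IsGreatest.csSup_eq ⟨⟨_, (mem_comp_iff hirr).2 fun x hx => if_neg hx, rfl⟩, ?_⟩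
  rintro _ ⟨s, hs, rfl⟩
  exact Finset.sum_le_sum fun x _ => elLe_compMax hirr hs x

theorem sInf_rk_comp (hirr : ∀ a, ¬ adj a a) (j : N) (t : Labelling adj pos k) :
    sInf (rk '' comp j t) = rk (compMin hirr j t) := by
  refine IsLeast.csInf_eq ⟨⟨_, (mem_comp_iff hirr).2 fun x hx => if_neg hx, rfl⟩, ?_⟩
  rintro _ ⟨s, hs, rfl⟩
  exact Finset.sum_le_sum fun x _ => compMin_elLe hirr hs x

theorem mwt_eq_sum_color (hirr : ∀ a, ¬ adj a a) (j : N) (t : Labelling adj pos k) :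
    mwt j t = ∑ x with x.1.1 = j, (2 * (t.1 x : ℤ) - (maxValue t x + minValue t x : ℕ)) := by
  rw [mwt, sSup_rk_comp hirr, sInf_rk_comp hirr, rk_eq_sum, rk_eq_sum, rk_eq_sum,
    Finset.sum_filter]
  push_cast
  rw [← Finset.sum_sub_distrib, ← Finset.sum_sub_distrib, ← Finset.sum_sub_distrib]
  refine Finset.sum_congr rfl fun x _ => ?_
  change (t.1 x - ((ite _ _ _ : ℕ) : ℤ)) - ((ite _ _ _ : ℕ) - t.1 x) = _
  split_ifs <;> ring

end Component

section Heap

variable {N : Type} [DecidableEq N]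

/-- The number of positions of colour `j` and rank less than `n`. -/
def colorCount (pos : Finset (N × ℕ)) (j : N) (n : ℕ) : ℕ :=
  Nat.count (fun r => (j, r) ∈ pos) n

/-- The number of positions of colour `j`; the bound in `colorCount` exceeds every rank. -/
def colorMult (pos : Finset (N × ℕ)) (j : N) : ℕ :=
  colorCount pos j (pos.sup Prod.snd + 1)

/-- The positions whose colour is adjacent to `j` and whose rank exceeds that of exactly `i`
positions of colour `j`. For `0 < i < colorMult pos j` these are the neighbours lying between two
consecutive positions of colour `j`; for `i = 0` and `i = colorMult pos j` they are the neighbours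
below the first and above the last such position. -/
def gap (adj : N → N → Prop) [DecidableRel adj] (pos : Finset (N × ℕ)) (j : N) (i : ℕ) :
    Finset {x // x ∈ pos} :=
  {y | adj y.1.1 j ∧ colorCount pos j y.1.2 = i}

/-- A finite simply-laced minuscule heap in which every colour occurs: positions of adjacent
colours are comparable, there are exactly two neighbours between any two consecutive positions of
the same colour, and at most one beyond the first and the last of them. -/
structure IsMinusculeHeap (adj : N → N → Prop) [DecidableRel adj] (pos : Finset (N × ℕ)) :
    Prop where
  irrefl : ∀ a, ¬ adj a a
  symm : ∀ a b, adj a b → adj b a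
  comparable : ∀ x y : {x // x ∈ pos}, adj x.1.1 y.1.1 →
    ple adj pos x.1 y.1 ∨ ple adj pos y.1 x.1
  colorMult_pos : ∀ j, 0 < colorMult pos j
  card_gap_zero : ∀ j, (gap adj pos j 0).card ≤ 1
  card_gap : ∀ j, ∀ i < colorMult pos j, 0 < i → (gap adj pos j i).card = 2
  card_gap_colorMult : ∀ j, (gap adj pos j (colorMult pos j)).card ≤ 1

/-- The simply-laced generalized Cartan matrix of the graph `adj`. -/
def cartan (adj : N → N → Prop) [DecidableRel adj] (i j : N) : ℤ :=
  if i = j then 2 else if adj i j then -1 else 0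

variable {adj : N → N → Prop} [DecidableRel adj] {pos : Finset (N × ℕ)} {j : N}

theorem mem_gap_iff {i : ℕ} {y : {x // x ∈ pos}} :
    y ∈ gap adj pos j i ↔ adj y.1.1 j ∧ colorCount pos j y.1.2 = i := by
  simp only [gap, Finset.mem_filter, Finset.mem_univ, true_and]

theorem colorCount_lt {x : {x // x ∈ pos}} (hx : x.1.1 = j) {n : ℕ} (hn : x.1.2 < n) :
    colorCount pos j x.1.2 < colorCount pos j n := by
  subst hx
  exact Nat.count_strict_mono x.2 hn

theorem colorCount_succ {x : {x // x ∈ pos}} (hx : x.1.1 = j) :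
    colorCount pos j (x.1.2 + 1) = colorCount pos j x.1.2 + 1 := by
  subst hx
  exact Nat.count_succ_eq_succ_count x.2

theorem sum_color_eq_sum_range {M : Type*} [AddCommMonoid M] (pos : Finset (N × ℕ)) (j : N)
    (f : ℕ → M) :
    ∑ x : {x // x ∈ pos} with x.1.1 = j, f (colorCount pos j x.1.2) =
      ∑ i ∈ Finset.range (colorMult pos j), f i := by
  rw [colorMult, colorCount, ← sum_count_eq_sum_range]
  refine Finset.sum_bij (fun x _ => x.1.2) (fun x hx => ?_) (fun x hx y hy hxy => ?_)
    (fun r hr => ?_) (fun _ _ => rfl)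
  · obtain rfl := (Finset.mem_filter.1 hx).2
    exact Finset.mem_filter.2 ⟨Finset.mem_range.2 (rank_lt_sup_add_one x), x.2⟩
  · exact Subtype.ext
      (Prod.ext ((Finset.mem_filter.1 hx).2.trans (Finset.mem_filter.1 hy).2.symm) hxy)
  · exact ⟨⟨(j, r), (Finset.mem_filter.1 hr).2⟩, Finset.mem_filter.2 ⟨Finset.mem_univ _, rfl⟩, rfl⟩

theorem sum_range_sum_gap {M : Type*} [AddCommMonoid M] (j : N) (f : {x // x ∈ pos} → M) :
    ∑ i ∈ Finset.range (colorMult pos j + 1), ∑ y ∈ gap adj pos j i, f y =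
      ∑ y with adj y.1.1 j, f y := by
  have hcount : ∀ y : {x // x ∈ pos}, colorCount pos j y.1.2 < colorMult pos j + 1 := fun y =>
    Nat.lt_succ_of_le (Nat.count_monotone _ (rank_lt_sup_add_one y).le)
  rw [← Finset.sum_fiberwise_of_maps_to fun y _ => Finset.mem_range.2 (hcount y)]
  simp only [gap, Finset.filter_filter]

namespace IsMinusculeHeap

variable (h : IsMinusculeHeap adj pos) {k : ℕ}
include h

theorem ple_and_rank_lt_or {x y : {x // x ∈ pos}} (hxy : adj x.1.1 y.1.1) :
    (ple adj pos x.1 y.1 ∧ x.1.2 < y.1.2) ∨ (ple adj pos y.1 x.1 ∧ y.1.2 < x.1.2) := by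
  have hne : x.1 ≠ y.1 := fun heq => h.irrefl _ (heq ▸ hxy)
  exact (h.comparable x y hxy).imp
    (fun hle => ⟨hle, (eq_or_rank_lt_of_ple hle).resolve_left hne⟩)
    (fun hle => ⟨hle, (eq_or_rank_lt_of_ple hle).resolve_left hne.symm⟩)

theorem mem_gap_of_step_left {x y : {x // x ∈ pos}} (hx : x.1.1 = j)
    (hxy : step adj pos x.1 y.1) : y ∈ gap adj pos j (colorCount pos j x.1.2 + 1) := by
  obtain ⟨-, -, hadj, hrank⟩ := hxy
  rw [hx] at hadj
  exact mem_gap_iff.2 ⟨h.symm _ _ hadj, by rw [hrank, colorCount_succ hx]⟩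

theorem mem_gap_of_step_right {x y : {x // x ∈ pos}} (hx : x.1.1 = j)
    (hyx : step adj pos y.1 x.1) : y ∈ gap adj pos j (colorCount pos j x.1.2) := by
  obtain ⟨-, -, hadj, hrank⟩ := hyx
  rw [hx] at hadj
  have not_mem : (j, y.1.2) ∉ pos := fun hmem => by
    rcases h.ple_and_rank_lt_or (y := ⟨_, hmem⟩) hadj with ⟨-, hlt⟩ | ⟨-, hlt⟩ <;>
      exact lt_irrefl _ hlt
  exact mem_gap_iff.2 ⟨hadj, by rw [hrank]; exact (Nat.count_succ_eq_count not_mem).symm⟩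

theorem ple_of_mem_gap {x y : {x // x ∈ pos}} (hx : x.1.1 = j)
    (hy : y ∈ gap adj pos j (colorCount pos j x.1.2)) : ple adj pos y.1 x.1 := by
  obtain ⟨hadj, hcount⟩ := mem_gap_iff.1 hy
  exact ((h.ple_and_rank_lt_or (hx.symm ▸ hadj)).resolve_right fun hlt =>
    (colorCount_lt hx hlt.2).ne' hcount).1

theorem ple_of_mem_gap_succ {x y : {x // x ∈ pos}} (hx : x.1.1 = j)
    (hy : y ∈ gap adj pos j (colorCount pos j x.1.2 + 1)) : ple adj pos x.1 y.1 := by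
  obtain ⟨hadj, hcount⟩ := mem_gap_iff.1 hy
  refine ((h.ple_and_rank_lt_or (hx.symm ▸ h.symm _ _ hadj)).resolve_right fun hlt => ?_).1
  have : colorCount pos j y.1.2 ≤ colorCount pos j x.1.2 := Nat.count_monotone _ hlt.2.le
  omega

theorem maxValue_eq (t : Labelling adj pos k) {x : {x // x ∈ pos}} (hx : x.1.1 = j) :
    maxValue t x = (gap adj pos j (colorCount pos j x.1.2)).fold min k t.1 := by
  refine eq_of_forall_le_iff fun c => ?_
  rw [le_maxValue_iff, Finset.le_fold_min]
  refine and_congr_right fun _ => ⟨fun hc y hy => ?_, fun hc y hy =>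
    hc y (h.mem_gap_of_step_right hx hy)⟩
  have hyx : y.1 ≠ x.1 := fun heq => h.irrefl j <| by
    simpa only [heq, hx] using (mem_gap_iff.1 hy).1
  obtain ⟨z, hyz, hzx⟩ := (h.ple_of_mem_gap hx hy).cases_tail.resolve_left hyx.symm
  exact (hc ⟨z, hzx.1⟩ hzx).trans (t.2.2.1 ⟨z, hzx.1⟩ y hyz)

theorem minValue_eq (t : Labelling adj pos k) {x : {x // x ∈ pos}} (hx : x.1.1 = j) :
    minValue t x = (gap adj pos j (colorCount pos j x.1.2 + 1)).sup t.1 := by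
  refine eq_of_forall_ge_iff fun c => ?_
  rw [minValue_le_iff, Finset.sup_le_iff]
  refine ⟨fun hc y hy => ?_, fun hc y hy => hc y (h.mem_gap_of_step_left hx hy)⟩
  have hxy : x.1 ≠ y.1 := fun heq => h.irrefl j <| by
    simpa only [← heq, hx] using (mem_gap_iff.1 hy).1
  obtain ⟨z, hxz, hzy⟩ := (h.ple_of_mem_gap_succ hx hy).cases_head.resolve_left hxy
  exact (t.2.2.1 y ⟨z, hxz.2.1⟩ hzy).trans (hc ⟨z, hxz.2.1⟩ hxz)

/-- Each interior gap is `{a, b}`, and it contributes `min (t a) (t b)` to the position above it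
and `max (t a) (t b)` to the one below it, in total `t a + t b`. -/
theorem sum_maxValue_add_minValue (j : N) (t : Labelling adj pos k) :
    ∑ x with x.1.1 = j, (maxValue t x + minValue t x) =
      (∑ y with adj y.1.1 j, t.1 y) + if gap adj pos j 0 = ∅ then k else 0 := by
  let G := gap adj pos j
  obtain ⟨n, hn⟩ := Nat.exists_eq_add_one.2 (h.colorMult_pos j)
  have hinterior : ∀ i ∈ Finset.range n,
      (G (i + 1)).fold min k t.1 + (G (i + 1)).sup t.1 = ∑ y ∈ G (i + 1), t.1 y := fun i hi =>
    fold_min_add_sup_of_card_eq_two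
      (h.card_gap j _ (by rw [hn]; exact Nat.succ_lt_succ (Finset.mem_range.1 hi)) i.succ_pos)
      t.2.1
  have hbottom : (G 0).fold min k t.1 = ∑ y ∈ G 0, t.1 y + if G 0 = ∅ then k else 0 :=
    fold_min_of_card_le_one (h.card_gap_zero j) t.2.1
  have htop : (G (n + 1)).sup t.1 = ∑ y ∈ G (n + 1), t.1 y :=
    sup_of_card_le_one (hn ▸ h.card_gap_colorMult j) _
  calc ∑ x with x.1.1 = j, (maxValue t x + minValue t x)
      = ∑ i ∈ Finset.range (n + 1), ((G i).fold min k t.1 + (G (i + 1)).sup t.1) := by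
        rw [← hn, ← sum_color_eq_sum_range pos j]
        refine Finset.sum_congr rfl fun x hx => ?_
        have hxj := (Finset.mem_filter.1 hx).2
        rw [h.maxValue_eq t hxj, h.minValue_eq t hxj]
    _ = (G 0).fold min k t.1 + ∑ i ∈ Finset.range n,
          ((G (i + 1)).fold min k t.1 + (G (i + 1)).sup t.1) + (G (n + 1)).sup t.1 := by
        rw [Finset.sum_add_distrib, Finset.sum_add_distrib, Finset.sum_range_succ',
          Finset.sum_range_succ (fun i => (G (i + 1)).sup t.1)]
        ring
    _ = ∑ i ∈ Finset.range (n + 1 + 1), ∑ y ∈ G i, t.1 y +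
          if G 0 = ∅ then k else 0 := by
        rw [Finset.sum_congr rfl hinterior, hbottom, htop, Finset.sum_range_succ,
          Finset.sum_range_succ']
        ring
    _ = _ := by rw [← hn, sum_range_sum_gap]

theorem mwt_eq (j : N) (t : Labelling adj pos k) :
    mwt j t = ∑ x, cartan adj x.1.1 j * (t.1 x : ℤ) -
      if gap adj pos j 0 = ∅ then (k : ℤ) else 0 := by
  have hcartan : ∀ x : {x // x ∈ pos}, cartan adj x.1.1 j * (t.1 x : ℤ) =
      (if x.1.1 = j then 2 * (t.1 x : ℤ) else 0) - if adj x.1.1 j then (t.1 x : ℤ) else 0 := by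
    intro x
    rcases eq_or_ne x.1.1 j with hx | hx
    · simp only [cartan, hx, if_true, if_neg (h.irrefl j), sub_zero]
    · simp only [cartan, if_neg hx]
      split_ifs <;> ring
  rw [mwt_eq_sum_color h.irrefl, Finset.sum_sub_distrib, ← Nat.cast_sum,
    h.sum_maxValue_add_minValue, Finset.sum_congr rfl fun x _ => hcartan x,
    Finset.sum_sub_distrib, ← Finset.sum_filter, ← Finset.sum_filter]
  push_cast
  ring

theorem mwt_of_edge {i : N} {t s : Labelling adj pos k} (hts : edge i t s) (j : N) :
    mwt j s = mwt j t + cartan adj i j := by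
  obtain ⟨x, rfl, hx, hne⟩ := hts
  rw [h.mwt_eq, h.mwt_eq, ← Finset.add_sum_erase _ _ (Finset.mem_univ x),
    ← Finset.add_sum_erase (a := x) _ _ (Finset.mem_univ x), hx,
    Finset.sum_congr rfl fun y hy => by rw [hne y (Finset.ne_of_mem_erase hy)]]
  push_cast
  ring

theorem mwt_of_const {t : Labelling adj pos k} (ht : ∀ x, t.1 x = k) (j : N) :
    mwt j t = if gap adj pos j (colorMult pos j) = ∅ then (k : ℤ) else 0 := by
  let w : ℕ → ℤ := fun i => if gap adj pos j i = ∅ then k else 0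
  have hterm : ∀ x : {x // x ∈ pos}, x.1.1 = j →
      2 * (t.1 x : ℤ) - (maxValue t x + minValue t x : ℕ) = w (colorCount pos j x.1.2 + 1) := by
    intro x hx
    have hmax : maxValue t x = k :=
      (le_maxValue_iff.1 le_rfl).1.antisymm ((ht x).symm.trans_le (le_maxValue t x))
    rw [hmax, h.minValue_eq t hx, ht x, funext ht]
    simp only [w]
    split_ifs with hempty
    · rw [hempty, Finset.sup_empty, Nat.bot_eq_zero]
      push_cast
      ring
    · rw [Finset.sup_const (Finset.nonempty_iff_ne_empty.2 hempty)]
      push_cast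
      ring
  obtain ⟨n, hn⟩ := Nat.exists_eq_add_one.2 (h.colorMult_pos j)
  have hinterior : ∀ i ∈ Finset.range n, w (i + 1) = 0 := fun i hi => if_neg fun hempty => by
    have hcard := h.card_gap j (i + 1) (by have := Finset.mem_range.1 hi; omega) i.succ_pos
    rw [hempty, Finset.card_empty] at hcard
    exact absurd hcard (by decide)
  rw [mwt_eq_sum_color h.irrefl,
    Finset.sum_congr rfl fun x hx => hterm x (Finset.mem_filter.1 hx).2,
    sum_color_eq_sum_range pos j fun i => w (i + 1), hn, Finset.sum_range_succ,
    Finset.sum_eq_zero hinterior, zero_add]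

end IsMinusculeHeap

end Heap

end CL

theorem isMinusculeHeap_pos7 : CL.IsMinusculeHeap adj7 pos7 where
  irrefl := by decide
  symm := by decide
  comparable := by
    have reachable : ∀ x y : {x // x ∈ pos7}, adj7 x.1.1 y.1.1 →
        y.1 ∈ (CL.stepImage adj7 pos7)^[y.1.2 - x.1.2] {x.1} ∨
          x.1 ∈ (CL.stepImage adj7 pos7)^[x.1.2 - y.1.2] {y.1} := by
      decide +kernel
    exact fun x y hxy => (reachable x y hxy).imp
      (CL.ple_of_mem_stepImage_iterate_singleton x.2)
      (CL.ple_of_mem_stepImage_iterate_singleton y.2)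
  colorMult_pos := by decide +kernel
  card_gap_zero := by decide +kernel
  card_gap := by decide +kernel
  card_gap_colorMult := by decide +kernel

theorem gap_colorMult_pos7_eq_empty_iff :
    ∀ j, CL.gap adj7 pos7 j (CL.colorMult pos7 j) = ∅ ↔ j = n1 := by
  decide +kernel

theorem statement_2_general {N : Type} [DecidableEq N] {adj : N → N → Prop} [DecidableRel adj]
    {pos : Finset (N × ℕ)} (h : CL.IsMinusculeHeap adj pos) (k : ℕ) :
    (∀ (i : N) (t s : CL.Labelling adj pos k), CL.edge i t s → ∀ j : N,
      CL.mwt j s = CL.mwt j t + CL.cartan adj i j) ∧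
    (∃ top : CL.Labelling adj pos k, (∀ x, top.1 x = k) ∧ (∀ t, CL.elLe t top) ∧
      ∀ j : N, CL.mwt j top =
        if CL.gap adj pos j (CL.colorMult pos j) = ∅ then (k : ℤ) else 0) :=
  ⟨fun _ _ _ hts => h.mwt_of_edge hts,
    .ofStep (fun _ => k) (fun _ => le_rfl) (fun _ _ _ => le_rfl), fun _ => rfl,
    fun t => t.2.1, h.mwt_of_const fun _ => rfl⟩

/-- `L7(k)` is `E₇`-structured, and its unique maximal element (the constant
function `k`) has weight `kω₁`. -/
theorem statement_2 (k : ℕ) :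
    (∀ (i : N7) (t s : L7 k), CL.edge i t s → ∀ j : N7,
      CL.mwt j s = CL.mwt j t + A7 i j) ∧
    (∃ top : L7 k, (∀ x, top.1 x = k) ∧ (∀ t : L7 k, CL.elLe t top) ∧
      CL.mwt n1 top = (k : ℤ) ∧ ∀ j : N7, j ≠ n1 → CL.mwt j top = 0) := by
  obtain ⟨hedge, top, hconst, hmax, hwt⟩ := statement_2_general isMinusculeHeap_pos7 k
  exact ⟨hedge, top, hconst, hmax,
    (hwt n1).trans (if_pos ((gap_colorMult_pos7_eq_empty_iff n1).2 rfl)),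
    fun j hj => (hwt j).trans (if_neg ((gap_colorMult_pos7_eq_empty_iff j).not.2 hj))⟩

end
end

section
/- For all nonnegative integers a and b, the edge-colored lattice L6(a,b) is E6-structured: for every covering edge t ⋖ s of L6(a,b) of color i and every node j, m_j(s) = m_j(t) + A(E6)_{i,j}. Moreover L6(a,b) has a unique maximal element, and its weight is aω_{1'} + bω_{6'}: m_{1'} of the maximal element equals a, m_{6'} of the maximal element equals b, and m_j of the maximal element equals 0 for every other node j. -/
noncomputable section

/-! ### Type `E₆` data -/

/-- The nodes `1', 2', 3', 4', 5', 6'` of the `E₆` Dynkin diagram. -/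
inductive N6 : Type
  | m1 | m2 | m3 | m4 | m5 | m6
  deriving DecidableEq

instance : Fintype N6 where
  elems := {N6.m1, N6.m2, N6.m3, N6.m4, N6.m5, N6.m6}
  complete := by intro x; cases x <;> decide

open N6

/-- Adjacency in the `E₆` Dynkin diagram: edges `1'-2', 2'-3', 3'-4', 3'-5', 5'-6'`. -/
abbrev adj6 : N6 → N6 → Prop := fun a b =>
  (a, b) ∈ ([(m1, m2), (m2, m3), (m3, m4), (m3, m5), (m5, m6)] : List (N6 × N6)) ∨
  (b, a) ∈ ([(m1, m2), (m2, m3), (m3, m4), (m3, m5), (m5, m6)] : List (N6 × N6))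

/-- The Cartan matrix of type `E₆`, indexed by the nodes. -/
def A6 : N6 → N6 → ℤ := fun i j => if i = j then 2 else if adj6 i j then -1 else 0

/-- The 24 (color, rank) positions of the poset `P24 = 𝒫`. -/
def pos24 : Finset (N6 × ℕ) :=
  {(m1, 0), (m2, 1), (m3, 2), (m4, 3), (m5, 3), (m3, 4), (m6, 4), (m2, 5), (m5, 5),
   (m1, 6), (m3, 6), (m2, 7), (m4, 7), (m1, 8), (m3, 8), (m2, 9), (m5, 9), (m3, 10),
   (m6, 10), (m4, 11), (m5, 11), (m3, 12), (m2, 13), (m1, 14)}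

/-- The 16 (color, rank) positions of the minuscule poset `P16' = P_{E₆}(ω₁')`. -/
def pos16p : Finset (N6 × ℕ) :=
  {(m6, 0), (m5, 1), (m3, 2), (m2, 3), (m4, 3), (m1, 4), (m3, 4), (m2, 5), (m5, 5),
   (m3, 6), (m6, 6), (m4, 7), (m5, 7), (m3, 8), (m2, 9), (m1, 10)}

/-- The 16 (color, rank) positions of the minuscule poset `P16'' = P_{E₆}(ω₆')`. -/
def pos16pp : Finset (N6 × ℕ) :=
  {(m1, 0), (m2, 1), (m3, 2), (m4, 3), (m5, 3), (m3, 4), (m6, 4), (m2, 5), (m5, 5),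
   (m1, 6), (m3, 6), (m2, 7), (m4, 7), (m3, 8), (m5, 9), (m6, 10)}

/-- The extra constraints on elements of `L6(a,b)`: `c((1',8)) ≤ a` and `c((1',6)) ≥ a`. -/
def extra6 (a : ℕ) : ({x : N6 × ℕ // x ∈ pos24} → ℕ) → Prop := fun c =>
  c ⟨(m1, 8), by decide⟩ ≤ a ∧ a ≤ c ⟨(m1, 6), by decide⟩

/-- The lattice `L6(a,b) = L_{E₆}(aω₁' + bω₆')`. -/
abbrev L6ab (a b : ℕ) : Type := CL.Elt adj6 pos24 (a + b) (extra6 a)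

/-- The lattice `L6'(k) = L_{E₆}(kω₁')`. -/
abbrev L6p (k : ℕ) : Type := CL.Elt adj6 pos16p k (fun _ => True)

/-- The lattice `L6''(k) = L_{E₆}(kω₆')`. -/
abbrev L6pp (k : ℕ) : Type := CL.Elt adj6 pos16pp k (fun _ => True)

/-!
Neighbouring positions of `P24` have different colors. Hence, once the values at the positions of
the other colors are fixed, the value at each position `x` of color `i` ranges over an interval
`[l x, u x]` independently of the others, the color-`i` component of `t` is the product of these
intervals, and `m_i(t) = ∑ (2 t(x) - l x - u x)` over the positions `x` of color `i`. The bounds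
`l x` and `u x` are maxima and minima of at most two neighbouring values, and in `P24` they pair up
so that `max u v + min u v = u + v` applies. This gives
`m_i(t) = ∑ A(x, i) t(x) - const`, the sum being over all positions, where `A(x, i)` is the Cartan
matrix entry of the color of `x` and `i`. As an affine function of `t`, it changes by the expected
Cartan matrix entry along each edge.
-/

namespace CL

section Bounds

variable {N : Type}

/-- The bound `k` and the constraint `extra` together amount to the entrywise bounds
`floor` and `ceil`. -/
def HasBounds (pos : Finset (N × ℕ)) (k : ℕ) (extra : ({x : N × ℕ // x ∈ pos} → ℕ) → Prop)
    (floor ceil : N × ℕ → ℕ) : Prop :=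
  ∀ c : {x : N × ℕ // x ∈ pos} → ℕ,
    ((∀ x, c x ≤ k) ∧ extra c) ↔ ∀ x, floor x.1 ≤ c x ∧ c x ≤ ceil x.1

variable (adj : N → N → Prop) (pos : Finset (N × ℕ)) (floor ceil : N × ℕ → ℕ) [DecidableRel adj]

/-- The least value at `p` compatible with `floor` and with the values of `f` at the upper
covers of `p`; labellings are order-reversing, so upper covers bound from below. -/
def lowerBound (f : N × ℕ → ℕ) (p : N × ℕ) : ℕ :=
  {q ∈ pos | adj p.1 q.1 ∧ q.2 = p.2 + 1}.fold max (floor p) f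

/-- The greatest value at `p` compatible with `ceil` and with the values of `f` at the lower
covers of `p`. -/
def upperBound (f : N × ℕ → ℕ) (p : N × ℕ) : ℕ :=
  {q ∈ pos | adj q.1 p.1 ∧ p.2 = q.2 + 1}.fold min (ceil p) f

variable {adj pos floor ceil}

lemma lowerBound_le_iff {f : N × ℕ → ℕ} {p : N × ℕ} (hp : p ∈ pos) {v : ℕ} :
    lowerBound adj pos floor f p ≤ v ↔ floor p ≤ v ∧ ∀ q, step adj pos p q → f q ≤ v := by
  simp [lowerBound, Finset.fold_max_le, step, hp]

lemma le_upperBound_iff {f : N × ℕ → ℕ} {p : N × ℕ} (hp : p ∈ pos) {v : ℕ} :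
    v ≤ upperBound adj pos ceil f p ↔ v ≤ ceil p ∧ ∀ q, step adj pos q p → v ≤ f q := by
  simp [upperBound, Finset.le_fold_min, step, hp]

end Bounds

section Labellings

variable {N : Type} {adj : N → N → Prop} {pos : Finset (N × ℕ)}
  {k : ℕ} {extra : ({x : N × ℕ // x ∈ pos} → ℕ) → Prop} {i : N}
  {r s t : Elt adj pos k extra} {floor ceil : N × ℕ → ℕ}

lemma comp_symm (h : s ∈ comp i t) : t ∈ comp i s :=
  have : Std.Symm fun r s : Elt adj pos k extra => edge i r s ∨ edge i s r := ⟨fun _ _ => Or.symm⟩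
  Relation.ReflTransGen.stdSymm.symm _ _ h

/-- The labelling `t` as a function on all pairs, zero outside the set of positions. -/
def value (t : Elt adj pos k extra) : N × ℕ → ℕ :=
  Function.extend Subtype.val t.1 0

lemma value_coe (t : Elt adj pos k extra) (x : {x // x ∈ pos}) : value t x = t.1 x :=
  Subtype.val_injective.extend_apply _ _ x

lemma value_of_notMem (t : Elt adj pos k extra) {p : N × ℕ} (hp : p ∉ pos) : value t p = 0 :=
  Function.extend_apply' _ _ _ fun ⟨x, hx⟩ => hp (hx ▸ x.2)

lemma value_le (t : Elt adj pos k extra) (p : N × ℕ) : value t p ≤ k := by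
  by_cases hp : p ∈ pos
  · exact (value_coe t ⟨p, hp⟩).trans_le (t.2.1 _)
  · exact (value_of_notMem t hp).trans_le k.zero_le

lemma value_le_value_of_ple (t : Elt adj pos k extra) {p q : N × ℕ} (hp : p ∈ pos) (hq : q ∈ pos)
    (h : ple adj pos p q) : value t q ≤ value t p := by
  simpa only [← value_coe] using t.2.2.1 ⟨q, hq⟩ ⟨p, hp⟩ h

lemma value_injective : Function.Injective (value : Elt adj pos k extra → N × ℕ → ℕ) := by
  intro s t h
  refine Subtype.ext (funext fun x => ?_)
  rw [← value_coe, ← value_coe, h]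

lemma rk_eq_sum_value (t : Elt adj pos k extra) : rk t = ∑ p ∈ pos, value t p := by
  simp only [rk, ← value_coe, Finset.sum_attach pos (value t)]

lemma rk_le_rk (h : value s ≤ value t) : rk s ≤ rk t := by
  simpa only [rk_eq_sum_value] using Finset.sum_le_sum fun p _ => h p

lemma edge_iff_value [DecidableEq N] :
    edge i s t ↔ ∃ p ∈ pos, p.1 = i ∧ value t = value s + Pi.single p 1 := by
  constructor
  · rintro ⟨x, hx, hx₁, hne⟩
    refine ⟨x, x.2, hx, funext fun q => ?_⟩
    by_cases hq : q ∈ pos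
    · lift q to {x // x ∈ pos} using hq
      rcases eq_or_ne q x with rfl | hqx
      · simp [value_coe, hx₁]
      · simp [value_coe, hne q hqx, Subtype.coe_ne_coe.2 hqx]
    · have hqx : q ≠ x := fun h => hq (h ▸ x.2)
      simp [value_of_notMem _ hq, hqx]
  · rintro ⟨p, hp, hpi, h⟩
    refine ⟨⟨p, hp⟩, hpi, ?_, fun y hy => ?_⟩
    · simp [← value_coe, h]
    · have hyp : (y : N × ℕ) ≠ p := fun e => hy (Subtype.ext e)
      simp [← value_coe, h, hyp]

lemma sum_mul_value_of_edge {R : Type*} [NonAssocSemiring R] (w : N → R) (h : edge i s t) :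
    ∑ p ∈ pos, w p.1 * (value t p : R) = ∑ p ∈ pos, w p.1 * (value s p : R) + w i := by
  classical
  obtain ⟨p, hp, rfl, ht⟩ := edge_iff_value.1 h
  simp [ht, mul_add, Finset.sum_add_distrib, Pi.single_apply, hp]

lemma rk_of_edge (h : edge i s t) : rk t = rk s + 1 := by
  simpa only [rk_eq_sum_value, one_mul, Nat.cast_id] using
    sum_mul_value_of_edge (R := ℕ) (fun _ => 1) h

lemma value_eqOn_of_edge (h : edge i s t) : Set.EqOn (value s) (value t) {p | p.1 ≠ i} := by
  classical
  obtain ⟨p, -, rfl, ht⟩ := edge_iff_value.1 h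
  intro q hq
  have hqp : q ≠ p := fun e => hq (e ▸ rfl)
  simp [ht, hqp]

lemma value_eqOn_of_mem_comp (h : s ∈ comp i t) :
    Set.EqOn (value s) (value t) {p | p.1 ≠ i} := by
  induction h with
  | refl => exact Set.eqOn_refl _ _
  | tail _ he ih =>
    exact (he.elim (fun e => (value_eqOn_of_edge e).symm) value_eqOn_of_edge).trans ih

lemma value_le_value_of_eqOn (h : Set.EqOn (value s) (value t) {p | p.1 ≠ i})
    (hle : ∀ p ∈ pos, p.1 = i → value s p ≤ value t p) : value s ≤ value t := by
  intro p
  by_cases hp : p ∈ pos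
  · by_cases hpi : p.1 = i
    · exact hle p hp hpi
    · exact (h hpi).le
  · exact (value_of_notMem s hp).trans_le (Nat.zero_le _)

lemma value_eqOn_of_eq_ite [DecidableEq N] {f : N × ℕ → ℕ}
    (h : ∀ p ∈ pos, value s p = if p.1 = i then f p else value t p) :
    Set.EqOn (value s) (value t) {p | p.1 ≠ i} := by
  intro p hpi
  by_cases hp : p ∈ pos
  · rw [h p hp, if_neg hpi]
  · rw [value_of_notMem s hp, value_of_notMem t hp]

lemma exists_value_eqOn_iff (hb : HasBounds pos k extra floor ceil) {c : N × ℕ → ℕ} :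
    (∃ t : Elt adj pos k extra, Set.EqOn (value t) c pos) ↔
      (∀ p ∈ pos, floor p ≤ c p ∧ c p ≤ ceil p) ∧ ∀ p q, step adj pos p q → c q ≤ c p := by
  constructor
  · rintro ⟨t, ht⟩
    refine ⟨fun p hp => ?_, fun p q h => ?_⟩
    · rw [← ht hp, value_coe t ⟨p, hp⟩]
      exact (hb t.1).1 ⟨t.2.1, t.2.2.2⟩ ⟨p, hp⟩
    · rw [← ht h.1, ← ht h.2.1]
      exact value_le_value_of_ple t h.1 h.2.1 (.single h)
  · rintro ⟨hbox, hstep⟩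
    have hple : ∀ p q, ple adj pos p q → c q ≤ c p := fun p q h =>
      Relation.ReflTransGen.trans_induction_on h (fun _ => le_rfl) (hstep _ _)
        fun _ _ h₁ h₂ => h₂.trans h₁
    have hc := (hb fun x => c x.1).2 fun x => hbox x.1 x.2
    exact ⟨⟨fun x => c x.1, hc.1, fun x y => hple y.1 x.1, hc.2⟩, fun p hp => value_coe _ ⟨p, hp⟩⟩

lemma exists_value_eqOn_iff_bounds [DecidableRel adj] (hb : HasBounds pos k extra floor ceil)
    (hadj : ∀ i, ¬ adj i i) (t : Elt adj pos k extra) {c : N × ℕ → ℕ}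
    (hc : Set.EqOn c (value t) {p | p.1 ≠ i}) :
    (∃ s : Elt adj pos k extra, Set.EqOn (value s) c pos) ↔
      ∀ p ∈ pos, p.1 = i → lowerBound adj pos floor (value t) p ≤ c p ∧
        c p ≤ upperBound adj pos ceil (value t) p := by
  have hne : ∀ {p q}, step adj pos p q → p.1 = i → q.1 ≠ i := fun h hp hq =>
    hadj i (by simpa only [hp, hq] using h.2.2.1)
  obtain ⟨htbox, htstep⟩ := (exists_value_eqOn_iff hb).1 ⟨t, Set.eqOn_refl _ _⟩
  rw [exists_value_eqOn_iff hb]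
  constructor
  · rintro ⟨hbox, hstep⟩ p hp hpi
    rw [lowerBound_le_iff hp, le_upperBound_iff hp]
    refine ⟨⟨(hbox p hp).1, fun q h => ?_⟩, (hbox p hp).2, fun q h => ?_⟩
    · exact hc (hne h hpi) ▸ hstep p q h
    · exact hc (fun hq => hne h hq hpi) ▸ hstep q p h
  · intro h
    refine ⟨fun p hp => ?_, fun p q hpq => ?_⟩
    · by_cases hpi : p.1 = i
      · exact ⟨((lowerBound_le_iff hp).1 (h p hp hpi).1).1,
          ((le_upperBound_iff hp).1 (h p hp hpi).2).1⟩
      · exact hc hpi ▸ htbox p hp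
    · by_cases hpi : p.1 = i
      · exact hc (hne hpq hpi) ▸ ((lowerBound_le_iff hpq.1).1 (h p hpq.1 hpi).1).2 q hpq
      by_cases hqi : q.1 = i
      · exact hc hpi ▸ ((le_upperBound_iff hpq.2.1).1 (h q hpq.2.1 hqi).2).2 p hpq
      · exact hc hpi ▸ hc hqi ▸ htstep p q hpq

lemma bounds_of_value_eqOn [DecidableRel adj] (hb : HasBounds pos k extra floor ceil)
    (hadj : ∀ i, ¬ adj i i) (h : Set.EqOn (value s) (value t) {p | p.1 ≠ i}) {p : N × ℕ}
    (hp : p ∈ pos) (hpi : p.1 = i) :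
    lowerBound adj pos floor (value t) p ≤ value s p ∧
      value s p ≤ upperBound adj pos ceil (value t) p :=
  (exists_value_eqOn_iff_bounds hb hadj t h).1 ⟨s, Set.eqOn_refl _ _⟩ p hp hpi

lemma exists_value_eq_add_single [DecidableEq N] [DecidableRel adj]
    (hb : HasBounds pos k extra floor ceil) (hadj : ∀ i, ¬ adj i i) {p : N × ℕ} (hp : p ∈ pos)
    (hlt : lowerBound adj pos floor (value t) p < value t p) :
    ∃ r : Elt adj pos k extra, value t = value r + Pi.single p 1 := by
  have hc : Set.EqOn (value t - Pi.single p 1) (value t) {q | q.1 ≠ p.1} := fun q hq => by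
    have hqp : q ≠ p := fun e => hq (e ▸ rfl)
    simp [hqp]
  obtain ⟨r, hr⟩ := (exists_value_eqOn_iff_bounds hb hadj t hc).2 fun q hq hqi => by
    have ht := bounds_of_value_eqOn hb hadj (Set.eqOn_refl (value t) _) hq hqi
    rcases eq_or_ne q p with rfl | hqp
    · simp only [Pi.sub_apply, Pi.single_eq_same]
      omega
    · simpa [hqp] using ht
  refine ⟨r, funext fun q => ?_⟩
  rcases eq_or_ne q p with rfl | hqp
  · simp only [hr hp, Pi.add_apply, Pi.sub_apply, Pi.single_eq_same]
    omega
  · by_cases hq : q ∈ pos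
    · simp [hr hq, hqp]
    · simp [value_of_notMem _ hq, hqp]

lemma exists_edge_of_lt_s3 (hb : HasBounds pos k extra floor ceil) (hadj : ∀ i, ¬ adj i i)
    (h : Set.EqOn (value s) (value t) {p | p.1 ≠ i}) (hlt : value s < value t) :
    ∃ r : Elt adj pos k extra, edge i r t ∧ value s ≤ value r := by
  classical
  obtain ⟨hle, p, hp⟩ := Pi.lt_def.1 hlt
  have hpi : p.1 = i := by
    by_contra hne
    exact hp.ne (h hne)
  have hpos : p ∈ pos := by
    by_contra hnot
    simp [value_of_notMem _ hnot] at hp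
  obtain ⟨r, hr⟩ := exists_value_eq_add_single hb hadj hpos
    ((bounds_of_value_eqOn hb hadj h hpos hpi).1.trans_lt hp)
  refine ⟨r, edge_iff_value.2 ⟨p, hpos, hpi, hr⟩, fun q => ?_⟩
  rcases eq_or_ne q p with rfl | hqp
  · exact Nat.le_of_lt_succ (by simpa [hr] using hp)
  · simpa [hr, hqp] using hle q

lemma mem_comp_of_le_s3 (hb : HasBounds pos k extra floor ceil) (hadj : ∀ i, ¬ adj i i)
    (h : Set.EqOn (value s) (value t) {p | p.1 ≠ i}) (hle : value s ≤ value t) :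
    s ∈ comp i t := by
  induction hn : rk t using Nat.strong_induction_on generalizing t with
  | _ n ih =>
    subst hn
    rcases hle.eq_or_lt with heq | hlt
    · exact value_injective heq ▸ .refl
    · obtain ⟨r, hrt, hsr⟩ := exists_edge_of_lt_s3 hb hadj h hlt
      have hr : rk r < rk t := (rk_of_edge hrt).symm ▸ Nat.lt_succ_self _
      exact .head (.inr hrt) (ih _ hr (h.trans (value_eqOn_of_edge hrt).symm) hsr rfl)

lemma exists_value_eq_lowerBound [DecidableEq N] [DecidableRel adj]
    (hb : HasBounds pos k extra floor ceil) (hadj : ∀ i, ¬ adj i i)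
    (i : N) (t : Elt adj pos k extra) :
    ∃ s : Elt adj pos k extra, ∀ p ∈ pos,
      value s p = if p.1 = i then lowerBound adj pos floor (value t) p else value t p := by
  refine (exists_value_eqOn_iff_bounds hb hadj t fun p hp => if_neg hp).2 fun p hp hpi => ?_
  have ht := bounds_of_value_eqOn hb hadj (Set.eqOn_refl (value t) _) hp hpi
  simpa only [if_pos hpi, le_refl, true_and] using ht.1.trans ht.2

lemma exists_value_eq_upperBound [DecidableEq N] [DecidableRel adj]
    (hb : HasBounds pos k extra floor ceil) (hadj : ∀ i, ¬ adj i i)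
    (i : N) (t : Elt adj pos k extra) :
    ∃ s : Elt adj pos k extra, ∀ p ∈ pos,
      value s p = if p.1 = i then upperBound adj pos ceil (value t) p else value t p := by
  refine (exists_value_eqOn_iff_bounds hb hadj t fun p hp => if_neg hp).2 fun p hp hpi => ?_
  have ht := bounds_of_value_eqOn hb hadj (Set.eqOn_refl (value t) _) hp hpi
  simpa only [if_pos hpi, le_refl, and_true] using ht.1.trans ht.2

theorem mwt_eq_sum_bounds [DecidableEq N] [DecidableRel adj]
    (hb : HasBounds pos k extra floor ceil) (hadj : ∀ i, ¬ adj i i)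
    (i : N) (t : Elt adj pos k extra) :
    mwt i t = ∑ p ∈ pos with p.1 = i, (2 * (value t p : ℤ) -
      (lowerBound adj pos floor (value t) p + upperBound adj pos ceil (value t) p : ℕ)) := by
  obtain ⟨bot, hbot⟩ := exists_value_eq_lowerBound hb hadj i t
  obtain ⟨top, htop⟩ := exists_value_eq_upperBound hb hadj i t
  have hbot_off := value_eqOn_of_eq_ite hbot
  have htop_off := value_eqOn_of_eq_ite htop
  have hle : ∀ s : Elt adj pos k extra, Set.EqOn (value s) (value t) {p | p.1 ≠ i} →
      value bot ≤ value s ∧ value s ≤ value top := fun s hs =>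
    ⟨value_le_value_of_eqOn (hbot_off.trans hs.symm) fun p hp hpi => by
      rw [hbot p hp, if_pos hpi]
      exact (bounds_of_value_eqOn hb hadj hs hp hpi).1,
     value_le_value_of_eqOn (hs.trans htop_off.symm) fun p hp hpi => by
      rw [htop p hp, if_pos hpi]
      exact (bounds_of_value_eqOn hb hadj hs hp hpi).2⟩
  obtain ⟨hbt, htt⟩ := hle t (Set.eqOn_refl _ _)
  have hmin : sInf (rk '' comp i t) = rk bot := IsLeast.csInf_eq
    ⟨⟨bot, mem_comp_of_le_s3 hb hadj hbot_off hbt, rfl⟩, by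
      rintro _ ⟨s, hs, rfl⟩
      exact rk_le_rk (hle s (value_eqOn_of_mem_comp hs)).1⟩
  have hmax : sSup (rk '' comp i t) = rk top := IsGreatest.csSup_eq
    ⟨⟨top, comp_symm (mem_comp_of_le_s3 hb hadj htop_off.symm htt), rfl⟩, by
      rintro _ ⟨s, hs, rfl⟩
      exact rk_le_rk (hle s (value_eqOn_of_mem_comp hs)).2⟩
  rw [mwt, hmin, hmax]
  simp only [rk_eq_sum_value, Nat.cast_sum, ← Finset.sum_sub_distrib, Finset.sum_filter]
  refine Finset.sum_congr rfl fun p hp => ?_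
  rw [hbot p hp, htop p hp]
  split_ifs <;> push_cast <;> ring

end Labellings

end CL

lemma adj6_irrefl (i : N6) : ¬ adj6 i i := by cases i <;> decide

lemma A6_eq (i j : N6) : A6 i j = (if i = j then 2 else 0) - if adj6 i j then 1 else 0 := by
  cases i <;> cases j <;> decide

/-- The entrywise lower bounds of `L6(a,b)`. -/
def floor6 (a : ℕ) (p : N6 × ℕ) : ℕ := if p = (m1, 6) then a else 0

/-- The entrywise upper bounds of `L6(a,b)`. -/
def ceil6 (a b : ℕ) (p : N6 × ℕ) : ℕ := if p = (m1, 8) then a else a + b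

lemma hasBounds6 (a b : ℕ) :
    CL.HasBounds pos24 (a + b) (extra6 a) (floor6 a) (ceil6 a b) := by
  refine fun c => ⟨fun ⟨hle, h8, h6⟩ x => ⟨?_, ?_⟩, fun h => ⟨fun x => ?_, ?_, ?_⟩⟩
  · rw [floor6]
    split_ifs with hx
    · rwa [show x = ⟨(m1, 6), by decide⟩ from Subtype.ext hx]
    · exact Nat.zero_le _
  · rw [ceil6]
    split_ifs with hx
    · rwa [show x = ⟨(m1, 8), by decide⟩ from Subtype.ext hx]
    · exact hle x
  · refine (h x).2.trans ?_
    rw [ceil6]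
    split_ifs <;> omega
  · exact (h ⟨(m1, 8), by decide⟩).2
  · exact (h ⟨(m1, 6), by decide⟩).1

/-- The positions of color `j` in `P24`, in increasing order. -/
def colorPositions : N6 → Finset (N6 × ℕ)
  | m1 => {(m1, 0), (m1, 6), (m1, 8), (m1, 14)}
  | m2 => {(m2, 1), (m2, 5), (m2, 7), (m2, 9), (m2, 13)}
  | m3 => {(m3, 2), (m3, 4), (m3, 6), (m3, 8), (m3, 10), (m3, 12)}
  | m4 => {(m4, 3), (m4, 7), (m4, 11)}
  | m5 => {(m5, 3), (m5, 5), (m5, 9), (m5, 11)}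
  | m6 => {(m6, 4), (m6, 10)}

lemma filter_color_eq (j : N6) : {p ∈ pos24 | p.1 = j} = colorPositions j := by
  cases j <;> decide

-- Each position of a color adjacent to `j` contributes its value exactly once: either as the only
-- bound from one side on a position of color `j`, or as one of two values `u`, `v` which bound two
-- consecutive positions of color `j`, through `max u v + min u v = u + v`. For `j = 1'` the
-- constraints on `(1',6)` and `(1',8)` make `a` such a value.
lemma sum_bounds6 {a b : ℕ} {f : N6 × ℕ → ℕ} (hf : ∀ p, f p ≤ a + b) (j : N6) :
    ∑ p ∈ pos24 with p.1 = j, (CL.lowerBound adj6 pos24 (floor6 a) f p +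
        CL.upperBound adj6 pos24 (ceil6 a b) f p) =
      ∑ p ∈ pos24 with adj6 p.1 j, f p + if j = m1 then (a + b) + a else 0 := by
  have hmin : ∀ p, min (f p) (a + b) = f p := fun p => min_eq_left (hf p)
  rw [filter_color_eq]
  cases j <;> simp +decide only [colorPositions, Finset.sum_insert, Finset.sum_singleton,
    Finset.mem_insert, Finset.mem_singleton] <;>
  simp +decide only [pos24, CL.lowerBound, CL.upperBound, floor6, ceil6, hmin,
    Finset.filter_insert, Finset.filter_singleton, Finset.fold_insert, Finset.fold_singleton,
    Finset.fold_empty, Finset.sum_insert, Finset.sum_singleton, Finset.mem_insert,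
    Finset.mem_singleton, insert_empty_eq, if_true, if_false, max_zero]
  case m1 => linarith [max_add_min (f (m2, 7)) a]
  case m2 =>
    linarith [max_add_min (f (m1, 6)) (f (m3, 6)), max_add_min (f (m1, 8)) (f (m3, 8))]
  case m3 =>
    linarith [max_add_min (f (m4, 3)) (f (m5, 3)), max_add_min (f (m2, 5)) (f (m5, 5)),
      max_add_min (f (m2, 7)) (f (m4, 7)), max_add_min (f (m2, 9)) (f (m5, 9)),
      max_add_min (f (m4, 11)) (f (m5, 11))]
  case m4 => ring
  case m5 =>
    linarith [max_add_min (f (m3, 4)) (f (m6, 4)), max_add_min (f (m3, 10)) (f (m6, 10))]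
  case m6 => ring

theorem mwt_eq_sum_A6 (a b : ℕ) (j : N6) (t : L6ab a b) :
    CL.mwt j t = ∑ p ∈ pos24, A6 p.1 j * CL.value t p - if j = m1 then (2 * a + b : ℤ) else 0 := by
  have hbounds := congrArg (Nat.cast : ℕ → ℤ) (sum_bounds6 (CL.value_le t) j)
  rw [Nat.cast_sum] at hbounds
  have hA : ∑ p ∈ pos24, A6 p.1 j * (CL.value t p : ℤ) =
      2 * ∑ p ∈ pos24 with p.1 = j, (CL.value t p : ℤ) -
        ∑ p ∈ pos24 with adj6 p.1 j, (CL.value t p : ℤ) := by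
    simp only [A6_eq, sub_mul, ite_mul, one_mul, zero_mul, Finset.sum_sub_distrib,
      Finset.sum_filter, Finset.mul_sum, mul_ite, mul_zero]
  rw [CL.mwt_eq_sum_bounds (hasBounds6 a b) adj6_irrefl, Finset.sum_sub_distrib, ← Finset.mul_sum,
    hA, hbounds]
  push_cast
  split_ifs <;> ring

theorem mwt_of_edge {a b : ℕ} {i : N6} {t s : L6ab a b} (h : CL.edge i t s) (j : N6) :
    CL.mwt j s = CL.mwt j t + A6 i j := by
  rw [mwt_eq_sum_A6, mwt_eq_sum_A6, CL.sum_mul_value_of_edge (fun n => A6 n j) h]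
  ring

/-- The filter of `P24` generated by `(1',8)`: the positions where the constraint `c((1',8)) ≤ a`
forces values at most `a`. -/
def filter24 : Finset (N6 × ℕ) :=
  {(m1, 8), (m2, 9), (m3, 10), (m4, 11), (m5, 11), (m3, 12), (m2, 13), (m1, 14)}

lemma filter24_subset : filter24 ⊆ pos24 := by decide

lemma mem_filter24_of_step {p q : N6 × ℕ} (h : CL.step adj6 pos24 p q) (hp : p ∈ filter24) :
    q ∈ filter24 := by
  have hclosed : ∀ p ∈ filter24, ∀ q ∈ pos24, adj6 p.1 q.1 → q.2 = p.2 + 1 → q ∈ filter24 := by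
    decide
  exact hclosed p hp q h.2.1 h.2.2.1 h.2.2.2

lemma ple_of_mem_filter24 {p : N6 × ℕ} (hp : p ∈ filter24) : CL.ple adj6 pos24 (m1, 8) p := by
  have h9 : CL.ple adj6 pos24 (m1, 8) (m2, 9) := .single (by unfold CL.step; decide)
  have h10 : CL.ple adj6 pos24 (m1, 8) (m3, 10) := h9.tail (by unfold CL.step; decide)
  have h11 : CL.ple adj6 pos24 (m1, 8) (m4, 11) := h10.tail (by unfold CL.step; decide)
  have h11' : CL.ple adj6 pos24 (m1, 8) (m5, 11) := h10.tail (by unfold CL.step; decide)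
  have h12 : CL.ple adj6 pos24 (m1, 8) (m3, 12) := h11.tail (by unfold CL.step; decide)
  have h13 : CL.ple adj6 pos24 (m1, 8) (m2, 13) := h12.tail (by unfold CL.step; decide)
  have h14 : CL.ple adj6 pos24 (m1, 8) (m1, 14) := h13.tail (by unfold CL.step; decide)
  simp only [filter24, Finset.mem_insert, Finset.mem_singleton] at hp
  rcases hp with rfl | rfl | rfl | rfl | rfl | rfl | rfl | rfl
  exacts [.refl, h9, h10, h11, h11', h12, h13, h14]

/-- The values of the maximal element of `L6(a,b)`. -/
def topValue (a b : ℕ) (p : N6 × ℕ) : ℕ := if p ∈ filter24 then a else a + b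

lemma exists_value_eqOn_topValue (a b : ℕ) :
    ∃ top : L6ab a b, Set.EqOn (CL.value top) (topValue a b) pos24 := by
  simp only [CL.exists_value_eqOn_iff (hasBounds6 a b), topValue]
  refine ⟨fun p _ => ⟨?_, ?_⟩, fun p q h => ?_⟩
  · rw [floor6]
    split_ifs <;> omega
  · rw [ceil6]
    by_cases hp : p = (m1, 8)
    · simp [hp, filter24]
    · rw [if_neg hp]
      split_ifs <;> omega
  · by_cases hp : p ∈ filter24
    · rw [if_pos hp, if_pos (mem_filter24_of_step h hp)]
    · rw [if_neg hp]
      split_ifs <;> omega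

lemma elLe_of_value_eqOn_topValue {a b : ℕ} {top : L6ab a b}
    (htop : Set.EqOn (CL.value top) (topValue a b) pos24) (t : L6ab a b) :
    CL.elLe t top := by
  intro x
  rw [← CL.value_coe, ← CL.value_coe, htop x.2, topValue]
  split_ifs with hx
  · calc CL.value t x ≤ CL.value t (m1, 8) :=
          CL.value_le_value_of_ple t (by decide) x.2 (ple_of_mem_filter24 hx)
      _ = t.1 ⟨(m1, 8), by decide⟩ := CL.value_coe t ⟨(m1, 8), by decide⟩
      _ ≤ a := t.2.2.2.1
  · exact CL.value_le t x

lemma mwt_of_value_eqOn_topValue {a b : ℕ} {top : L6ab a b}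
    (htop : Set.EqOn (CL.value top) (topValue a b) pos24) (j : N6) :
    CL.mwt j top = if j = m1 then (a : ℤ) else if j = m6 then (b : ℤ) else 0 := by
  have hpos : ∑ p ∈ pos24, A6 p.1 j = if j = m1 then 3 else 0 := by
    cases j <;> decide
  have hfilter : ∑ p ∈ filter24, A6 p.1 j = if j = m1 then 2 else if j = m6 then -1 else 0 := by
    cases j <;> decide
  have hsum : ∑ p ∈ pos24, A6 p.1 j * (CL.value top p : ℤ) =
      (a + b) * ∑ p ∈ pos24, A6 p.1 j - b * ∑ p ∈ filter24, A6 p.1 j := by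
    rw [← Finset.inter_eq_right.2 filter24_subset, ← Finset.sum_ite_mem, Finset.mul_sum,
      Finset.mul_sum, ← Finset.sum_sub_distrib]
    refine Finset.sum_congr rfl fun p hp => ?_
    rw [htop hp, topValue]
    split_ifs <;> push_cast <;> ring
  rw [mwt_eq_sum_A6, hsum, hpos, hfilter]
  cases j <;> simp
  all_goals ring

/-- `L6(a,b)` is `E₆`-structured, and its unique maximal element has weight
`aω₁' + bω₆'`. -/
theorem statement_3 (a b : ℕ) :
    (∀ (i : N6) (t s : L6ab a b), CL.edge i t s → ∀ j : N6,
      CL.mwt j s = CL.mwt j t + A6 i j) ∧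
    (∃ top : L6ab a b, (∀ t : L6ab a b, CL.elLe t top) ∧
      CL.mwt m1 top = (a : ℤ) ∧ CL.mwt m6 top = (b : ℤ) ∧
      ∀ j : N6, j ≠ m1 → j ≠ m6 → CL.mwt j top = 0) := by
  refine ⟨fun i t s h j => mwt_of_edge h j, ?_⟩
  obtain ⟨top, htop⟩ := exists_value_eqOn_topValue a b
  refine ⟨top, elLe_of_value_eqOn_topValue htop, ?_, ?_, fun j h1 h6 => ?_⟩
  · rw [mwt_of_value_eqOn_topValue htop, if_pos rfl]
  · rw [mwt_of_value_eqOn_topValue htop, if_neg (by decide), if_pos rfl]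
  · rw [mwt_of_value_eqOn_topValue htop, if_neg h1, if_neg h6]

end
end
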